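/- Let d ≤ n be positive integers, σ > 0, x₁,…,x_N ∈ ℝ^n, β₁,…,β_N > 0 with α := Σᵢβᵢ, m := Σᵢβᵢxᵢ, C := Σᵢβᵢxᵢxᵢᵀ, and for b ∈ ℝ^n set v(b) := m − αb and S(b) := C − mbᵀ − bmᵀ + αbbᵀ. Assume S(b) is positive definite for every b ∈ ℝ^n. Define G(U,b) := −(1/σ²)(trace(UᵀS(b)U) − ‖v(b)‖²/α) − v(b)ᵀU(UᵀS(b)U)⁻¹Uᵀv(b) + α log det(UᵀS(b)U). If (Û, b̂) minimizes G over St(d,n) × ℝ^n, then setting μ̂ := (1/α)Ûᵀv(b̂) and Σ̂ := (1/α)ÛᵀS(b̂)Û, the quadruple (Û, b̂, μ̂, Σ̂) maximizes the function (U, b, μ, Σ) ↦ Σᵢβᵢ log f(xᵢ | μ̃, Σ̃) over all U ∈ St(d,n), b ∈ ℝ^n, μ ∈ ℝ^d, Σ ∈ SPD(d), where Σ̃ := ((1/σ²)(I_n − UUᵀ) + U Σ⁻¹ Uᵀ)⁻¹ and μ̃ := Σ̃ U Σ⁻¹ μ + b. -/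

import Mathlib

open Matrix

/-- The Gaussian density `f(x | μ, Σ)` in dimension `k`. -/
noncomputable def gaussDensity {k : ℕ} (x μ : Fin k → ℝ) (S : Matrix (Fin k) (Fin k) ℝ) : ℝ :=
  (2 * Real.pi) ^ (-(k : ℝ) / 2) * S.det ^ (-(1 : ℝ) / 2) *
    Real.exp (-(1 / 2) * ((x - μ) ⬝ᵥ (S⁻¹ *ᵥ (x - μ))))

/-- `Σ̃ = ((1/σ²)(I - UUᵀ) + U Σ⁻¹ Uᵀ)⁻¹`. -/
noncomputable def tildeSigma {d n : ℕ} (σ : ℝ) (U : Matrix (Fin n) (Fin d) ℝ)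
    (S : Matrix (Fin d) (Fin d) ℝ) : Matrix (Fin n) (Fin n) ℝ :=
  ((σ ^ 2)⁻¹ • ((1 : Matrix (Fin n) (Fin n) ℝ) - U * Uᵀ) + U * S⁻¹ * Uᵀ)⁻¹

/-- `μ̃ = Σ̃ U Σ⁻¹ μ + b`. -/
noncomputable def tildeMu {d n : ℕ} (σ : ℝ) (U : Matrix (Fin n) (Fin d) ℝ)
    (S : Matrix (Fin d) (Fin d) ℝ) (μ : Fin d → ℝ) (b : Fin n → ℝ) : Fin n → ℝ :=
  tildeSigma σ U S *ᵥ (U *ᵥ (S⁻¹ *ᵥ μ)) + b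

/-- `m = Σᵢ βᵢ xᵢ`. -/
noncomputable def mVec {n N : ℕ} (x : Fin N → Fin n → ℝ) (β : Fin N → ℝ) : Fin n → ℝ :=
  ∑ i, β i • x i

/-- `v(b) = m − α b`. -/
noncomputable def vVec {n N : ℕ} (x : Fin N → Fin n → ℝ) (β : Fin N → ℝ) (b : Fin n → ℝ) :
    Fin n → ℝ :=
  mVec x β - (∑ i, β i) • b

/-- `S(b) = C − m bᵀ − b mᵀ + α b bᵀ`. -/
noncomputable def sMat {n N : ℕ} (x : Fin N → Fin n → ℝ) (β : Fin N → ℝ) (b : Fin n → ℝ) :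
    Matrix (Fin n) (Fin n) ℝ :=
  (∑ i, β i • Matrix.vecMulVec (x i) (x i)) - Matrix.vecMulVec (mVec x β) b
    - Matrix.vecMulVec b (mVec x β) + (∑ i, β i) • Matrix.vecMulVec b b

/-- The function `G(U, b)` from the M-step of the PCA-GMM EM algorithm. -/
noncomputable def gFun {d n N : ℕ} (σ : ℝ) (x : Fin N → Fin n → ℝ) (β : Fin N → ℝ)
    (U : Matrix (Fin n) (Fin d) ℝ) (b : Fin n → ℝ) : ℝ :=
  -(σ ^ 2)⁻¹ * ((Uᵀ * sMat x β b * U).trace - (vVec x β b ⬝ᵥ vVec x β b) / (∑ i, β i))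
    - vVec x β b ⬝ᵥ ((U * (Uᵀ * sMat x β b * U)⁻¹ * Uᵀ) *ᵥ vVec x β b)
    + (∑ i, β i) * Real.log (Uᵀ * sMat x β b * U).det

/-- The precision matrix `(1/σ²)(I - UUᵀ) + U Σ⁻¹ Uᵀ`, the inverse of `tildeSigma`. -/
noncomputable def precMat {d n : ℕ} (σ : ℝ) (U : Matrix (Fin n) (Fin d) ℝ)
    (S : Matrix (Fin d) (Fin d) ℝ) : Matrix (Fin n) (Fin n) ℝ :=
  (σ ^ 2)⁻¹ • ((1 : Matrix (Fin n) (Fin n) ℝ) - U * Uᵀ) + U * S⁻¹ * Uᵀ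

section Precision

variable {d n : ℕ} {σ : ℝ} {U : Matrix (Fin n) (Fin d) ℝ} {S : Matrix (Fin d) (Fin d) ℝ}

theorem precMat_mul (hU : Uᵀ * U = 1) : precMat σ U S * U = U * S⁻¹ := by
  simp only [precMat, Matrix.add_mul, Matrix.smul_mul, Matrix.sub_mul, Matrix.mul_assoc, hU]
  simp

theorem det_precMat (hσ : 0 < σ) (hU : Uᵀ * U = 1) :
    (precMat σ U S).det = ((σ ^ 2)⁻¹) ^ n * ((σ ^ 2) ^ d * S.det⁻¹) := by
  have h : precMat σ U S = (σ ^ 2)⁻¹ • (1 + U * ((σ ^ 2 • S⁻¹ - 1) * Uᵀ)) := by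
    have : (σ ^ 2)⁻¹ * σ ^ 2 = 1 := inv_mul_cancel₀ (by positivity)
    simp only [precMat, Matrix.sub_mul, Matrix.mul_sub, Matrix.smul_mul, Matrix.mul_smul,
      smul_add, smul_sub, smul_smul, this, one_smul, Matrix.one_mul, Matrix.mul_assoc]
    abel
  rw [h, det_smul, det_one_add_mul_comm, Matrix.mul_assoc, hU, Matrix.mul_one,
    add_sub_cancel, det_smul, det_nonsing_inv, Ring.inverse_eq_inv']
  simp

theorem det_precMat_pos (hσ : 0 < σ) (hU : Uᵀ * U = 1) (hS : S.PosDef) :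
    0 < (precMat σ U S).det := by
  rw [det_precMat hσ hU]
  have := hS.det_pos
  positivity

theorem posSemidef_precMat (hU : Uᵀ * U = 1) (hS : S.PosDef) :
    (precMat σ U S).PosSemidef := by
  have hproj : (1 - U * Uᵀ)ᴴ * (1 - U * Uᵀ) = 1 - U * Uᵀ := by
    have : U * Uᵀ * (U * Uᵀ) = U * Uᵀ := by
      rw [Matrix.mul_assoc, ← Matrix.mul_assoc Uᵀ, hU, Matrix.one_mul]
    simp [Matrix.sub_mul, Matrix.mul_sub, this]
  have h1 : (1 - U * Uᵀ).PosSemidef := hproj ▸ posSemidef_conjTranspose_mul_self _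
  have h2 := hS.inv.posSemidef.mul_mul_conjTranspose_same U
  rw [conjTranspose_eq_transpose_of_trivial] at h2
  exact (h1.smul (by positivity)).add h2

theorem inv_tildeSigma (hσ : 0 < σ) (hU : Uᵀ * U = 1) (hS : S.PosDef) :
    (tildeSigma σ U S)⁻¹ = precMat σ U S :=
  nonsing_inv_nonsing_inv _ (det_precMat_pos hσ hU hS).ne'.isUnit

theorem tildeMu_eq (hσ : 0 < σ) (hU : Uᵀ * U = 1) (hS : S.PosDef)
    (μ : Fin d → ℝ) (b : Fin n → ℝ) : tildeMu σ U S μ b = b + U *ᵥ μ := by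
  rw [tildeMu, mulVec_mulVec μ, ← precMat_mul (σ := σ) hU, mulVec_mulVec, ← Matrix.mul_assoc,
    show tildeSigma σ U S = (precMat σ U S)⁻¹ from rfl,
    nonsing_inv_mul _ (det_precMat_pos hσ hU hS).ne'.isUnit, Matrix.one_mul, add_comm]

theorem trace_precMat_mul (T : Matrix (Fin n) (Fin n) ℝ) :
    (precMat σ U S * T).trace =
      (σ ^ 2)⁻¹ * (T.trace - (Uᵀ * T * U).trace) + (S⁻¹ * (Uᵀ * T * U)).trace := by
  have h1 : (U * Uᵀ * T).trace = (Uᵀ * T * U).trace := by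
    rw [Matrix.mul_assoc, trace_mul_comm]
  have h2 : (U * S⁻¹ * Uᵀ * T).trace = (S⁻¹ * (Uᵀ * T * U)).trace := by
    rw [Matrix.mul_assoc, Matrix.mul_assoc, trace_mul_comm]
    simp only [Matrix.mul_assoc]
  simp [precMat, Matrix.add_mul, Matrix.sub_mul, h1, h2]

theorem log_gaussDensity_tilde (hσ : 0 < σ) (hU : Uᵀ * U = 1) (hS : S.PosDef)
    (x μ : Fin n → ℝ) :
    Real.log (gaussDensity x μ (tildeSigma σ U S)) =
      -(1 / 2) * (n * Real.log (2 * Real.pi) + (n - d) * Real.log (σ ^ 2) + Real.log S.det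
        + (x - μ) ⬝ᵥ (precMat σ U S *ᵥ (x - μ))) := by
  have hP := det_precMat_pos hσ hU hS
  have hdet : (tildeSigma σ U S).det = (precMat σ U S).det⁻¹ := by
    rw [show tildeSigma σ U S = (precMat σ U S)⁻¹ from rfl, det_nonsing_inv,
      Ring.inverse_eq_inv']
  have hpos : 0 < (tildeSigma σ U S).det := hdet ▸ inv_pos.2 hP
  have hlog : Real.log (tildeSigma σ U S).det = (n - d) * Real.log (σ ^ 2) + Real.log S.det := by
    have := hS.det_pos
    rw [hdet, det_precMat hσ hU, Real.log_inv, Real.log_mul (by positivity) (by positivity),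
      Real.log_mul (by positivity) (by positivity), Real.log_pow, Real.log_pow, Real.log_inv,
      Real.log_inv]
    ring
  have hpi : 0 < 2 * Real.pi := by positivity
  rw [gaussDensity, Real.log_mul (by positivity) (by positivity),
    Real.log_mul (by positivity) (by positivity), Real.log_exp, Real.log_rpow hpi,
    Real.log_rpow hpos, hlog, inv_tildeSigma hσ hU hS]
  ring

end Precision

section Moments

variable {n N : ℕ} (x : Fin N → Fin n → ℝ) (β : Fin N → ℝ)

theorem sMat_eq_sum (b : Fin n → ℝ) :
    sMat x β b = ∑ i, β i • vecMulVec (x i - b) (x i - b) := by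
  ext j k
  simp only [sMat, mVec, Matrix.add_apply, Matrix.sub_apply, Matrix.sum_apply, Matrix.smul_apply,
    vecMulVec_apply, Finset.sum_apply, Pi.smul_apply, Pi.sub_apply, smul_eq_mul, Finset.sum_mul,
    Finset.mul_sum, ← Finset.sum_sub_distrib, ← Finset.sum_add_distrib]
  exact Finset.sum_congr rfl fun i _ => by ring

theorem vVec_eq_sum (b : Fin n → ℝ) : vVec x β b = ∑ i, β i • (x i - b) := by
  simp [vVec, mVec, smul_sub, Finset.sum_sub_distrib, Finset.sum_smul]

theorem sum_quadForm_eq {P : Matrix (Fin n) (Fin n) ℝ} (hP : Pᵀ = P) (b c : Fin n → ℝ) :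
    ∑ i, β i * ((x i - (b + c)) ⬝ᵥ (P *ᵥ (x i - (b + c)))) =
      (P * sMat x β b).trace - 2 * ((P *ᵥ c) ⬝ᵥ vVec x β b)
        + (∑ i, β i) * (c ⬝ᵥ (P *ᵥ c)) := by
  have htr : (P * sMat x β b).trace = ∑ i, β i * ((x i - b) ⬝ᵥ (P *ᵥ (x i - b))) := by
    rw [sMat_eq_sum, Matrix.mul_sum, trace_sum]
    refine Finset.sum_congr rfl fun i _ => ?_
    rw [Matrix.mul_smul, trace_smul, mul_vecMulVec, trace_vecMulVec, dotProduct_comm, smul_eq_mul]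
  rw [htr, vVec_eq_sum, dotProduct_sum, Finset.mul_sum, Finset.sum_mul, ← Finset.sum_sub_distrib,
    ← Finset.sum_add_distrib]
  refine Finset.sum_congr rfl fun i _ => ?_
  have hsymm : c ⬝ᵥ (P *ᵥ (x i - b)) = (P *ᵥ c) ⬝ᵥ (x i - b) := by
    rw [dotProduct_mulVec, ← mulVec_transpose, hP]
  rw [show x i - (b + c) = (x i - b) - c by abel, mulVec_sub, sub_dotProduct, dotProduct_sub,
    dotProduct_sub, hsymm, dotProduct_comm (x i - b) (P *ᵥ c), dotProduct_smul, smul_eq_mul]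
  ring

theorem trace_sMat (hα : ∑ i, β i ≠ 0) (b : Fin n → ℝ) :
    (sMat x β b).trace = (sMat x β ((∑ i, β i)⁻¹ • mVec x β)).trace
      + (vVec x β b ⬝ᵥ vVec x β b) / ∑ i, β i := by
  simp only [sMat, vVec, trace_add, trace_sub, trace_smul, trace_vecMulVec, smul_eq_mul,
    dotProduct_smul, smul_dotProduct, sub_dotProduct, dotProduct_sub,
    dotProduct_comm b (mVec x β)]
  field_simp
  ring

theorem vVec_mean (hα : ∑ i, β i ≠ 0) : vVec x β ((∑ i, β i)⁻¹ • mVec x β) = 0 := by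
  rw [vVec, smul_smul, mul_inv_cancel₀ hα, one_smul, sub_self]

end Moments

theorem Matrix.PosDef.log_det_le_trace_sub {d : ℕ} {M : Matrix (Fin d) (Fin d) ℝ}
    (hM : M.PosDef) : Real.log M.det ≤ M.trace - d := by
  have hdet := hM.1.det_eq_prod_eigenvalues
  have htr := hM.1.trace_eq_sum_eigenvalues
  simp only [RCLike.ofReal_real_eq_id, id_eq] at hdet htr
  rw [hdet, htr, Real.log_prod fun i _ => (hM.eigenvalues_pos i).ne']
  calc ∑ i, Real.log (hM.1.eigenvalues i) ≤ ∑ i, (hM.1.eigenvalues i - 1) :=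
        Finset.sum_le_sum fun i _ => Real.log_le_sub_one_of_pos (hM.eigenvalues_pos i)
    _ = _ := by simp

open scoped MatrixOrder Matrix.Norms.L2Operator in
/-- For fixed `B`, the function `S ↦ log det S + tr (S⁻¹ B)` is minimal at `S = B`. -/
theorem Matrix.PosDef.log_det_add_le {d : ℕ} {S B : Matrix (Fin d) (Fin d) ℝ}
    (hS : S.PosDef) (hB : B.PosDef) :
    Real.log B.det + d ≤ Real.log S.det + (S⁻¹ * B).trace := by
  obtain ⟨R, hR, hSR⟩ : ∃ R : Matrix (Fin d) (Fin d) ℝ, IsUnit R ∧ S⁻¹ = Rᴴ * R :=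
    CStarAlgebra.isStrictlyPositive_iff_eq_star_mul_self.mp hS.inv.isStrictlyPositive
  have hM : (R * B * Rᴴ).PosDef :=
    (Matrix.IsUnit.posDef_star_right_conjugate_iff hR).2 hB
  have hdet : (R * B * Rᴴ).det = S.det⁻¹ * B.det := by
    rw [← Ring.inverse_eq_inv', ← det_nonsing_inv, hSR]
    simp only [det_mul]
    ring
  have htr : (R * B * Rᴴ).trace = (S⁻¹ * B).trace := by
    rw [trace_mul_comm, hSR, Matrix.mul_assoc]
  have h := hM.log_det_le_trace_sub
  rw [hdet, htr, Real.log_mul (inv_pos.2 hS.det_pos).ne' hB.det_pos.ne', Real.log_inv] at h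
  linarith

theorem posDef_transpose_mul_mul {d n : ℕ} {U : Matrix (Fin n) (Fin d) ℝ} (hU : Uᵀ * U = 1)
    {T : Matrix (Fin n) (Fin n) ℝ} (hT : T.PosDef) : (Uᵀ * T * U).PosDef := by
  rw [← conjTranspose_eq_transpose_of_trivial]
  refine hT.conjTranspose_mul_mul_same (Function.LeftInverse.injective (g := Uᵀ.mulVec) fun y => ?_)
  rw [mulVec_mulVec, hU, one_mulVec]

theorem sum_weights_pos {n N : ℕ} (hn : 0 < n) {x : Fin N → Fin n → ℝ} {β : Fin N → ℝ}
    (hβ : ∀ i, 0 < β i) (hS : (sMat x β 0).PosDef) : 0 < ∑ i, β i := by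
  rcases Nat.eq_zero_or_pos N with rfl | hN
  · have := hS.diag_pos (i := ⟨0, hn⟩)
    simp [sMat, mVec] at this
  · have : Nonempty (Fin N) := ⟨⟨0, hN⟩⟩
    exact Finset.sum_pos (fun i _ => hβ i) Finset.univ_nonempty

section Likelihood

variable {d n N : ℕ} {σ : ℝ} {x : Fin N → Fin n → ℝ} {β : Fin N → ℝ}
  {U : Matrix (Fin n) (Fin d) ℝ} {S : Matrix (Fin d) (Fin d) ℝ}

theorem sum_log_gaussDensity_tilde (hσ : 0 < σ) (hU : Uᵀ * U = 1) (hS : S.PosDef)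
    (μ : Fin n → ℝ) :
    ∑ i, β i * Real.log (gaussDensity (x i) μ (tildeSigma σ U S)) =
      -(1 / 2) * ((∑ i, β i) * (n * Real.log (2 * Real.pi) + (n - d) * Real.log (σ ^ 2))
        + ((∑ i, β i) * Real.log S.det
          + ∑ i, β i * ((x i - μ) ⬝ᵥ (precMat σ U S *ᵥ (x i - μ))))) := by
  simp only [log_gaussDensity_tilde hσ hU hS, Finset.sum_mul, ← Finset.sum_add_distrib,
    Finset.mul_sum]
  exact Finset.sum_congr rfl fun i _ => by ring

/-- The additive constant relating `gFun` to the profile negative log-likelihood. -/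
noncomputable def profileConst {n N : ℕ} (d : ℕ) (σ : ℝ) (x : Fin N → Fin n → ℝ)
    (β : Fin N → ℝ) : ℝ :=
  (σ ^ 2)⁻¹ * (sMat x β ((∑ i, β i)⁻¹ • mVec x β)).trace
    + (∑ i, β i) * (d - d * Real.log (∑ i, β i))

theorem log_det_inv_smul {a : ℝ} (ha : 0 < a) {A : Matrix (Fin d) (Fin d) ℝ} (hA : A.PosDef) :
    Real.log (a⁻¹ • A).det = Real.log A.det - d * Real.log a := by
  have := hA.det_pos
  rw [det_smul, Fintype.card_fin, Real.log_mul (by positivity) (by positivity), Real.log_pow,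
    Real.log_inv]
  ring

theorem profile_eq_gFun (hσ : 0 < σ) (hα : 0 < ∑ i, β i) (hU : Uᵀ * U = 1) {b : Fin n → ℝ}
    (hb : (sMat x β b).PosDef) {μ : Fin d → ℝ} (hμ : μ = (∑ i, β i)⁻¹ • (Uᵀ *ᵥ vVec x β b))
    (hS : S = (∑ i, β i)⁻¹ • (Uᵀ * sMat x β b * U)) :
    (∑ i, β i) * Real.log S.det + ∑ i, β i * ((x i - tildeMu σ U S μ b) ⬝ᵥ
      (precMat σ U S *ᵥ (x i - tildeMu σ U S μ b))) = gFun σ x β U b + profileConst d σ x β := by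
  have hA := posDef_transpose_mul_mul hU hb
  have hSpos : S.PosDef := hS ▸ hA.smul (inv_pos.2 hα)
  have hPt : (precMat σ U S)ᵀ = precMat σ U S := by
    rw [← conjTranspose_eq_transpose_of_trivial]
    exact (posSemidef_precMat hU hSpos).1
  have hlog : Real.log S.det =
      Real.log (Uᵀ * sMat x β b * U).det - d * Real.log (∑ i, β i) := by
    rw [hS, log_det_inv_smul hα hA]
  have hSinv : S⁻¹ = (∑ i, β i) • (Uᵀ * sMat x β b * U)⁻¹ := by
    rw [hS]
    refine inv_eq_left_inv ?_
    rw [smul_mul_smul_comm, mul_inv_cancel₀ hα.ne', one_smul,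
      nonsing_inv_mul _ hA.det_pos.ne'.isUnit]
  have htr : (S⁻¹ * (Uᵀ * sMat x β b * U)).trace = (∑ i, β i) * d := by
    rw [hSinv, Matrix.smul_mul, nonsing_inv_mul _ hA.det_pos.ne'.isUnit]
    simp
  rw [tildeMu_eq hσ hU hSpos, sum_quadForm_eq x β hPt, trace_precMat_mul, htr, hlog,
    trace_sMat x β hα.ne' b, mulVec_mulVec, precMat_mul hU]
  have hcross : (U * S⁻¹) *ᵥ μ = (U * (Uᵀ * sMat x β b * U)⁻¹ * Uᵀ) *ᵥ vVec x β b := by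
    rw [hSinv, hμ, mulVec_smul, Matrix.mul_smul, smul_mulVec, smul_smul, inv_mul_cancel₀ hα.ne',
      one_smul, mulVec_mulVec]
  have hquad : (∑ i, β i) * ((U *ᵥ μ) ⬝ᵥ ((U * S⁻¹) *ᵥ μ)) =
      vVec x β b ⬝ᵥ ((U * S⁻¹) *ᵥ μ) := by
    have h1 : ((U *ᵥ μ) ⬝ᵥ ((U * S⁻¹) *ᵥ μ)) = μ ⬝ᵥ (S⁻¹ *ᵥ μ) := by
      rw [dotProduct_comm, dotProduct_mulVec, ← mulVec_transpose, mulVec_mulVec,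
        ← Matrix.mul_assoc, hU, Matrix.one_mul, dotProduct_comm]
    have h2 : vVec x β b ⬝ᵥ ((U * S⁻¹) *ᵥ μ) = (Uᵀ *ᵥ vVec x β b) ⬝ᵥ (S⁻¹ *ᵥ μ) := by
      rw [← mulVec_mulVec, dotProduct_mulVec, mulVec_transpose]
    have h3 : Uᵀ *ᵥ vVec x β b = (∑ i, β i) • μ := by
      rw [hμ, smul_smul, mul_inv_cancel₀ hα.ne', one_smul]
    rw [h1, h2, h3, smul_dotProduct, smul_eq_mul]
  rw [hquad, hcross, dotProduct_comm (_ *ᵥ vVec x β b) (vVec x β b), gFun, profileConst]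
  ring

theorem gFun_mean_le_profile (hα : 0 < ∑ i, β i) (hU : Uᵀ * U = 1)
    (hb : (sMat x β ((∑ i, β i)⁻¹ • mVec x β)).PosDef) (hS : S.PosDef) (μ : Fin n → ℝ) :
    gFun σ x β U ((∑ i, β i)⁻¹ • mVec x β) + profileConst d σ x β ≤
      (∑ i, β i) * Real.log S.det
        + ∑ i, β i * ((x i - μ) ⬝ᵥ (precMat σ U S *ᵥ (x i - μ))) := by
  have hA := posDef_transpose_mul_mul hU hb
  have hP := posSemidef_precMat (σ := σ) hU hS
  have hPt : (precMat σ U S)ᵀ = precMat σ U S := by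
    rw [← conjTranspose_eq_transpose_of_trivial]
    exact hP.1
  have hq := sum_quadForm_eq x β hPt ((∑ i, β i)⁻¹ • mVec x β) (μ - (∑ i, β i)⁻¹ • mVec x β)
  rw [add_sub_cancel, vVec_mean x β hα.ne', dotProduct_zero, trace_precMat_mul] at hq
  have hnn := mul_nonneg hα.le
    (hP.dotProduct_mulVec_nonneg (μ - (∑ i, β i)⁻¹ • mVec x β))
  rw [star_trivial] at hnn
  have hkl := mul_le_mul_of_nonneg_left
    (hS.log_det_add_le (hA.smul (inv_pos.2 hα))) hα.le
  rw [log_det_inv_smul hα hA, Matrix.mul_smul, trace_smul, smul_eq_mul, mul_add _ _ (_ * _),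
    mul_inv_cancel_left₀ hα.ne'] at hkl
  rw [hq, gFun, profileConst, vVec_mean x β hα.ne']
  simp only [zero_dotProduct, zero_div]
  linarith

end Likelihood

theorem stmt_14 (d n N : ℕ) (hd : 0 < d) (hn : 0 < n) (hdn : d ≤ n)
    (σ : ℝ) (hσ : 0 < σ)
    (x : Fin N → Fin n → ℝ) (β : Fin N → ℝ) (hβ : ∀ i, 0 < β i)
    (hSpos : ∀ b : Fin n → ℝ, (sMat x β b).PosDef)
    (Uhat : Matrix (Fin n) (Fin d) ℝ) (bhat : Fin n → ℝ) (hUhat : Uhatᵀ * Uhat = 1)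
    (hmin : ∀ (U : Matrix (Fin n) (Fin d) ℝ) (b : Fin n → ℝ), Uᵀ * U = 1 →
      gFun σ x β Uhat bhat ≤ gFun σ x β U b)
    (muhat : Fin d → ℝ) (hmuhat : muhat = (∑ i, β i)⁻¹ • (Uhatᵀ *ᵥ vVec x β bhat))
    (Sighat : Matrix (Fin d) (Fin d) ℝ)
    (hSighat : Sighat = (∑ i, β i)⁻¹ • (Uhatᵀ * sMat x β bhat * Uhat)) :
    Sighat.PosDef ∧
      ∀ (U : Matrix (Fin n) (Fin d) ℝ) (b : Fin n → ℝ) (μ : Fin d → ℝ)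
        (S : Matrix (Fin d) (Fin d) ℝ), Uᵀ * U = 1 → S.PosDef →
        ∑ i, β i * Real.log (gaussDensity (x i) (tildeMu σ U S μ b) (tildeSigma σ U S))
          ≤ ∑ i, β i * Real.log
              (gaussDensity (x i) (tildeMu σ Uhat Sighat muhat bhat) (tildeSigma σ Uhat Sighat)) := by
  have hα := sum_weights_pos hn hβ (hSpos 0)
  have hSig : Sighat.PosDef :=
    hSighat ▸ (posDef_transpose_mul_mul hUhat (hSpos bhat)).smul (inv_pos.2 hα)
  refine ⟨hSig, fun U b μ S hU hS => ?_⟩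
  rw [sum_log_gaussDensity_tilde hσ hU hS, sum_log_gaussDensity_tilde hσ hUhat hSig,
    profile_eq_gFun hσ hα hUhat (hSpos bhat) hmuhat hSighat]
  have h1 := gFun_mean_le_profile (σ := σ) hα hU (hSpos _) hS (tildeMu σ U S μ b)
  have h2 := hmin U ((∑ i, β i)⁻¹ • mVec x β) hU
  linarith
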